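/- Let d ≥ 2 and r ≥ 1 be integers, G a graph, L an r-list assignment of G, and 𝒮 a nonempty distance-d amiable family of G. Then G admits a (d,r)-coloring φ : V(G) → {1,…,r} with φ(v) ∈ L(v) for every vertex v if and only if there exist an r-tuple (S_1,…,S_r) ∈ 𝒮^r and a map φ : V(G) → {1,…,r} such that φ(v) ∈ L(v) for every vertex v, φ^{-1}(i) ⊆ S_i for every i ∈ {1,…,r}, and for each i every connected component of G[S_i] contains at most one vertex of φ^{-1}(i). -/

import Mathlib

open SimpleGraph

/-- `X` is a distance-`d` independent set of `G`: its vertices are pairwise at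
distance at least `d` in `G`. -/
def DistIndep {V : Type*} (G : SimpleGraph V) (d : ℕ) (X : Set V) : Prop :=
  X.Pairwise fun u v => (d : ℕ∞) ≤ G.edist u v

/-- The connected components of `G[S]` are pairwise at distance at least `d` in `G`. -/
def CompsFar {V : Type*} (G : SimpleGraph V) (d : ℕ) (S : Set V) : Prop :=
  ∀ x y : S, ¬ (G.induce S).Reachable x y → (d : ℕ∞) ≤ G.edist x y

/-- `𝒮` is a distance-`d` amiable family of `G`: each member induces a `P₃`-free
subgraph whose connected components are pairwise at distance at least `d` in `G`, and
every maximal distance-`d` independent set of `G` is contained in some member. -/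
def DistAmiable {V : Type*} (G : SimpleGraph V) (d : ℕ) (𝒮 : Set (Set V)) : Prop :=
  (∀ S ∈ 𝒮, IsEmpty (pathGraph 3 ↪g G.induce S)) ∧
  (∀ S ∈ 𝒮, CompsFar G d S) ∧
  (∀ I : Set V, DistIndep G d I →
    (∀ J : Set V, DistIndep G d J → I ⊆ J → J = I) → ∃ S ∈ 𝒮, I ⊆ S)

/-- `φ` is a `(d,r)`-colouring of `G`: any two distinct vertices at distance less than
`d` in `G` receive different colours. -/
def IsDistColoring {V : Type*} (G : SimpleGraph V) (d : ℕ) (r : ℕ)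
    (φ : V → Fin r) : Prop :=
  ∀ u v : V, u ≠ v → G.edist u v < (d : ℕ∞) → φ u ≠ φ v

/-!
A map is a `(d,r)`-colouring exactly when its colour classes are distance-`d` independent, so the
theorem follows by choosing a member of `𝒮` for each colour once distance-`d` independence of a
single set `X` is characterised: `X` lies in some `S ∈ 𝒮` and meets every component of `G[S]` at
most once. Given `X` independent, Zorn's lemma extends it to a maximal independent set, hence to a
member `S`; the components of the `P₃`-free graph `G[S]` are cliques, and as `d ≥ 2` an independent
set contains no edge. Conversely, vertices in different components of `G[S]` are at distance at
least `d`.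
-/

/-- `X` meets every connected component of `G[S]` in at most one vertex. Vertices of `X` outside
`S` are not constrained. -/
def MeetsCompsAtMostOnce {V : Type*} (G : SimpleGraph V) (S X : Set V) : Prop :=
  ∀ x y : S, ↑x ∈ X → ↑y ∈ X → (G.induce S).Reachable x y → x = y

theorem exists_maximal_pairwise_superset {α : Type*} {R : α → α → Prop} {s : Set α}
    (hs : s.Pairwise R) : ∃ t, s ⊆ t ∧ Maximal (fun u : Set α => u.Pairwise R) t :=
  zorn_subset_nonempty {u | u.Pairwise R}
    (fun c hc hchain _ => ⟨⋃₀ c, (Set.pairwise_sUnion hchain.directedOn).2 hc,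
      fun _ => Set.subset_sUnion_of_mem⟩) s hs

section P3Free

variable {W : Type*} {H : SimpleGraph W}

theorem isCompleteMultipartite_compl_of_p3Free (hH : IsEmpty (pathGraph 3 ↪g H)) :
    Hᶜ.IsCompleteMultipartite := by
  by_contra h
  exact hH.false (Embedding.complEquiv.symm (pathGraph3ComplEmbeddingOf h))

theorem eq_or_adj_of_reachable_of_p3Free (hH : IsEmpty (pathGraph 3 ↪g H)) {x y : W}
    (hxy : H.Reachable x y) : x = y ∨ H.Adj x y := by
  have not_compl_adj {u v : W} : ¬ Hᶜ.Adj u v ↔ u = v ∨ H.Adj u v := by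
    rw [compl_adj, not_and_not_right, or_iff_not_imp_left]
  rw [← not_compl_adj]
  rw [reachable_iff_reflTransGen] at hxy
  induction hxy with
  | refl => exact Hᶜ.irrefl
  | tail _ huv ih =>
    exact (isCompleteMultipartite_compl_of_p3Free hH).trans _ _ _ ih (not_compl_adj.2 (.inr huv))

end P3Free

section AmiableFamily

variable {V : Type*} {G : SimpleGraph V} {d : ℕ} {S X : Set V} {𝒮 : Set (Set V)}

theorem DistIndep.not_adj (hX : DistIndep G d X) (hd : 2 ≤ d) {u v : V} (hu : u ∈ X)
    (hv : v ∈ X) : ¬ G.Adj u v := by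
  intro huv
  have hd1 : (d : ℕ∞) ≤ 1 := (hX hu hv huv.ne).trans_eq (edist_eq_one_iff_adj.2 huv)
  have : d ≤ 1 := mod_cast hd1
  omega

theorem DistIndep.meetsCompsAtMostOnce (hX : DistIndep G d X) (hd : 2 ≤ d)
    (hS : IsEmpty (pathGraph 3 ↪g G.induce S)) : MeetsCompsAtMostOnce G S X :=
  fun _ _ hx hy hxy =>
    (eq_or_adj_of_reachable_of_p3Free hS hxy).resolve_right (hX.not_adj hd hx hy)

theorem CompsFar.distIndep (hS : CompsFar G d S) (hXS : X ⊆ S)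
    (hX : MeetsCompsAtMostOnce G S X) : DistIndep G d X :=
  fun u hu v hv huv => hS ⟨u, hXS hu⟩ ⟨v, hXS hv⟩
    fun hreach => huv (congrArg Subtype.val (hX _ _ hu hv hreach))

theorem DistAmiable.exists_superset (h𝒮 : DistAmiable G d 𝒮) (hX : DistIndep G d X) :
    ∃ S ∈ 𝒮, X ⊆ S := by
  obtain ⟨-, -, hcover⟩ := h𝒮
  obtain ⟨I, hXI, hI⟩ := exists_maximal_pairwise_superset hX
  obtain ⟨S, hS, hIS⟩ := hcover I hI.prop fun J hJ hIJ => (hI.eq_of_subset hJ hIJ).symm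
  exact ⟨S, hS, hXI.trans hIS⟩

theorem DistAmiable.distIndep_iff (h𝒮 : DistAmiable G d 𝒮) (hd : 2 ≤ d) :
    DistIndep G d X ↔ ∃ S ∈ 𝒮, X ⊆ S ∧ MeetsCompsAtMostOnce G S X := by
  constructor
  · intro hX
    obtain ⟨S, hS, hXS⟩ := h𝒮.exists_superset hX
    exact ⟨S, hS, hXS, hX.meetsCompsAtMostOnce hd (h𝒮.1 S hS)⟩
  · rintro ⟨S, hS, hXS, hX⟩
    exact (h𝒮.2.1 S hS).distIndep hXS hX

theorem isDistColoring_iff_forall_distIndep {r : ℕ} {φ : V → Fin r} :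
    IsDistColoring G d r φ ↔ ∀ i, DistIndep G d (φ ⁻¹' {i}) := by
  constructor
  · intro hφ i u hu v hv huv
    exact not_lt.1 fun hlt => hφ u v huv hlt (hu.trans hv.symm)
  · intro hφ u v huv hlt heq
    exact (hφ (φ v) heq rfl huv).not_gt hlt

theorem stmt15_general {C : Type*} (hd : 2 ≤ d) (h𝒮 : DistAmiable G d 𝒮) (L : V → Set C) :
    (∃ φ : V → C, (∀ c, DistIndep G d (φ ⁻¹' {c})) ∧ ∀ v, φ v ∈ L v) ↔
      ∃ S : C → Set V, (∀ c, S c ∈ 𝒮) ∧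
        ∃ φ : V → C, (∀ v, φ v ∈ L v) ∧
          (∀ c, φ ⁻¹' {c} ⊆ S c) ∧ ∀ c, MeetsCompsAtMostOnce G (S c) (φ ⁻¹' {c}) := by
  simp only [h𝒮.distIndep_iff hd, Classical.skolem, forall_and]
  constructor
  · rintro ⟨φ, ⟨S, hS, hφS, hφ⟩, hL⟩
    exact ⟨S, hS, φ, hL, hφS, hφ⟩
  · rintro ⟨S, hS, φ, hL, hφS, hφ⟩
    exact ⟨φ, ⟨S, hS, hφS, hφ⟩, hL⟩

end AmiableFamily

/-- Let `d ≥ 2`, `r ≥ 1`, `L` an `r`-list assignment of `G` and `𝒮` a nonempty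
distance-`d` amiable family of `G`. Then `G` has a `(d,r)`-colouring respecting `L` iff
there are an `r`-tuple `(S 1, …, S r) ∈ 𝒮^r` and a map `φ : V(G) → Fin r` respecting `L`
with `φ⁻¹(i) ⊆ S i` for every `i` and such that, for each `i`, every connected component
of `G[S i]` contains at most one vertex of `φ⁻¹(i)`. -/
theorem stmt15 {V : Type*} [Fintype V] (d r : ℕ) (hd : 2 ≤ d) (hr : 1 ≤ r)
    (G : SimpleGraph V) (L : V → Set (Fin r)) (𝒮 : Set (Set V))
    (h𝒮ne : 𝒮.Nonempty) (h𝒮 : DistAmiable G d 𝒮) :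
    (∃ φ : V → Fin r, IsDistColoring G d r φ ∧ ∀ v, φ v ∈ L v) ↔
      (∃ S : Fin r → Set V, (∀ i, S i ∈ 𝒮) ∧
        ∃ φ : V → Fin r, (∀ v, φ v ∈ L v) ∧
          (∀ (v : V) (i : Fin r), φ v = i → v ∈ S i) ∧
          (∀ i : Fin r, ∀ x y : S i, φ ↑x = i → φ ↑y = i →
            (G.induce (S i)).Reachable x y → x = y)) := by
  simp only [isDistColoring_iff_forall_distIndep, forall_comm (α := V) (β := Fin r)]
  exact stmt15_general hd h𝒮 L
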